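/- Let X be a real-valued random variable with unbounded distribution F and Y a nonnegative random variable with distribution G, neither degenerate at zero, and let H be the distribution of XY. Suppose (X,Y) follows a Sarmanov distribution with kernels φ₁, φ₂ and parameter θ, satisfies Assumption 2 (Ḡ(bx)=o(H̄(x)) for every b>0), and there exist constants c>0, d₁∈(0,∞) and a measurable function ψ such that ψ(y)=lim_{δ→0+} (∫_{y−δ}^{y+δ} φ₂(v) G(dv))/(G(y+δ)−G(y−δ)) for all y in the support of Y, φ₁(x)→d₁ as x→∞, and P(1+θd₁ψ(Y)≥c)=1. If F belongs to the class L(γ) for some γ≥0, then H belongs to L(γ/β_G), where β_G=sup{y:G(y)<1} and γ/β_G is understood as 0 when β_G=∞. -/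

import Mathlib

open MeasureTheory ProbabilityTheory Filter Set Asymptotics

noncomputable section

/-- The tail (survival) function `x ↦ P(Z > x)` of a random variable `Z`. -/
def rvTail {Ω : Type*} [MeasureSpace Ω] (Z : Ω → ℝ) (x : ℝ) : ℝ :=
  (ℙ {ω | x < Z ω}).toReal

/-- The cumulative distribution function `x ↦ P(Z ≤ x)` of a random variable `Z`. -/
def rvCdf {Ω : Type*} [MeasureSpace Ω] (Z : Ω → ℝ) (x : ℝ) : ℝ :=
  (ℙ {ω | Z ω ≤ x}).toReal

/-- The left limit of the cdf, `G(y-) = P(Z < y)`. -/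
def rvCdfLeft {Ω : Type*} [MeasureSpace Ω] (Z : Ω → ℝ) (y : ℝ) : ℝ :=
  (ℙ {ω | Z ω < y}).toReal

/-- The distribution of `Z` is unbounded (above): its tail is positive for every `x > 0`. -/
def UnboundedDist {Ω : Type*} [MeasureSpace Ω] (Z : Ω → ℝ) : Prop :=
  ∀ x > 0, 0 < rvTail Z x

/-- The support `D_Z = {y : P(Z ∈ (y - δ, y + δ)) > 0 for all δ > 0}` of the
distribution of `Z`. -/
def distSupport {Ω : Type*} [MeasureSpace Ω] (Z : Ω → ℝ) : Set ℝ :=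
  {y | ∀ δ > 0, 0 < ℙ {ω | Z ω ∈ Ioo (y - δ) (y + δ)}}

/-- The distribution of `Z` belongs to the class `L(γ)`: it is unbounded above and
`P(Z > x - t) ~ e^{γ t} P(Z > x)` as `x → ∞`, for every `t > 0`. -/
def MemLGamma {Ω : Type*} [MeasureSpace Ω] (Z : Ω → ℝ) (γ : ℝ) : Prop :=
  UnboundedDist Z ∧
    ∀ t > 0, (fun x => rvTail Z (x - t)) ~[atTop] (fun x => Real.exp (γ * t) * rvTail Z x)

/-- The tail of the two-fold convolution of the distribution of `Z` with itself. -/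
def convSqTail {Ω : Type*} [MeasureSpace Ω] (Z : Ω → ℝ) (x : ℝ) : ℝ :=
  (((Measure.map Z ℙ).conv (Measure.map Z ℙ)) (Ioi x)).toReal

/-- The distribution of `Z` belongs to the class `S(γ)`: it belongs to `L(γ)`, the
exponential moment `c = ∫ e^{γ y} dV(y)` is finite, and the tail of the two-fold
convolution satisfies `V̄*²(x) ~ 2 c V̄(x)` as `x → ∞`. -/
def MemSGamma {Ω : Type*} [MeasureSpace Ω] (Z : Ω → ℝ) (γ : ℝ) : Prop :=
  MemLGamma Z γ ∧
    Integrable (fun y => Real.exp (γ * y)) (Measure.map Z ℙ) ∧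
    (fun x => convSqTail Z x) ~[atTop]
      (fun x => 2 * (∫ y, Real.exp (γ * y) ∂(Measure.map Z ℙ)) * rvTail Z x)

open Classical in
/-- `γ / β_G`, where `β_G = sup {y : G(y) < 1}` is the right endpoint of the distribution
of `Z`, with the convention that `γ / β_G = 0` when `β_G = ∞`.
(Note that `G(y) < 1 ↔ P(Z > y) > 0`.) -/
def gammaOverBeta {Ω : Type*} [MeasureSpace Ω] (Z : Ω → ℝ) (γ : ℝ) : ℝ :=
  if BddAbove {y : ℝ | 0 < rvTail Z y} then γ / sSup {y : ℝ | 0 < rvTail Z y} else 0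

/-- Assumption 2: `Ḡ(b x) = o(H̄(x))` as `x → ∞` for every constant `b > 0`, where `G` is
the distribution of `Y` and `H` is the distribution of the product `X Y`. -/
def Assumption2 {Ω : Type*} [MeasureSpace Ω] (X Y : Ω → ℝ) : Prop :=
  ∀ b > 0, (fun x => rvTail Y (b * x)) =o[atTop] fun x => rvTail (fun ω => X ω * Y ω) x

/-- Assumption 1: `K x y` is the conditional probability `P(X > x | Y = y)`, namely for
`y` in the support of `Y` it is the limit of `P(X > x | Y ∈ (y - δ, y + δ])` as `δ → 0+`,
and for `y` outside the support it is the unconditional probability `P(X > x)` (and then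
`h y = 1`); `h : [0,∞) → (0,∞)` is a measurable function such that
`P(X > x | Y = y) ~ h(y) P(X > x)` as `x → ∞`, uniformly for `y ≥ 0`. -/
def Assumption1 {Ω : Type*} [MeasureSpace Ω] (X Y : Ω → ℝ) (h : ℝ → ℝ) (K : ℝ → ℝ → ℝ) :
    Prop :=
  Measurable h ∧ (∀ y, 0 ≤ y → 0 < h y) ∧
    (∀ y, y ∉ distSupport Y → h y = 1 ∧ ∀ x, K x y = rvTail X x) ∧
    (∀ y ∈ distSupport Y, ∀ x : ℝ,
      Tendsto
        (fun δ : ℝ => (ℙ {ω | x < X ω ∧ Y ω ∈ Ioc (y - δ) (y + δ)}).toReal /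
          (ℙ {ω | Y ω ∈ Ioc (y - δ) (y + δ)}).toReal)
        (nhdsWithin 0 (Ioi 0)) (nhds (K x y))) ∧
    ∀ ε > 0, ∀ᶠ x in atTop, ∀ y, 0 ≤ y → |K x y / (h y * rvTail X x) - 1| < ε

/-- `(X, Y)` follows a Farlie–Gumbel–Morgenstern (FGM) distribution with parameter
`θ ∈ [-1, 1]`: `P(X > x, Y > y) = F̄(x) Ḡ(y) (1 + θ F(x) G(y))` for all `x` in the
support of `X` and `y` in the support of `Y`. -/
def FGM {Ω : Type*} [MeasureSpace Ω] (X Y : Ω → ℝ) (θ : ℝ) : Prop :=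
  θ ∈ Icc (-1 : ℝ) 1 ∧
    ∀ x ∈ distSupport X, ∀ y ∈ distSupport Y,
      (ℙ {ω | x < X ω ∧ y < Y ω}).toReal =
        rvTail X x * rvTail Y y * (1 + θ * rvCdf X x * rvCdf Y y)

/-- `(X, Y)` follows a bivariate Sarmanov distribution with kernels `φ₁, φ₂` and
parameter `θ`: the joint law has density `1 + θ φ₁(x) φ₂(y)` with respect to the product
of the marginal laws, where `φ₁, φ₂` are measurable, `E φ₁(X) = E φ₂(Y) = 0` and
`1 + θ φ₁(x) φ₂(y) ≥ 0`. -/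
def Sarmanov {Ω : Type*} [MeasureSpace Ω] (X Y : Ω → ℝ) (φ₁ φ₂ : ℝ → ℝ) (θ : ℝ) : Prop :=
  Measurable φ₁ ∧ Measurable φ₂ ∧
    Integrable (fun ω => φ₁ (X ω)) ℙ ∧ Integrable (fun ω => φ₂ (Y ω)) ℙ ∧
    (∫ ω, φ₁ (X ω)) = 0 ∧ (∫ ω, φ₂ (Y ω)) = 0 ∧
    (∀ x y : ℝ, 0 ≤ y → 0 ≤ 1 + θ * φ₁ x * φ₂ y) ∧
    Measure.map (fun ω => (X ω, Y ω)) ℙ =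
      ((Measure.map X ℙ).prod (Measure.map Y ℙ)).withDensity
        (fun p => ENNReal.ofReal (1 + θ * φ₁ p.1 * φ₂ p.2))

/-- The condition `ψ(y) = lim_{δ → 0+} (∫_{y-δ}^{y+δ} φ₂(v) G(dv)) / (G(y+δ) - G(y-δ))`
for all `y` in the support of `Y`. -/
def SarmanovPsi {Ω : Type*} [MeasureSpace Ω] (Y : Ω → ℝ) (φ₂ ψ : ℝ → ℝ) : Prop :=
  ∀ y ∈ distSupport Y,
    Tendsto
      (fun δ : ℝ => (∫ v in Ioc (y - δ) (y + δ), φ₂ v ∂(Measure.map Y ℙ)) /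
        (rvCdf Y (y + δ) - rvCdf Y (y - δ)))
      (nhdsWithin 0 (Ioi 0)) (nhds (ψ y))

/-!
Given `X = x`, the law of `Y` has density `1 + θ φ₁(x) φ₂(v)` with respect to `G`, and this
converges uniformly in `v` to `1 + θ d₁ φ₂(v)` as `x → ∞`. Assumption 2 makes the event that
`X Y` is large while `X` stays bounded negligible, so the tail of `X Y` is equivalent to that of
a product of independent factors with laws `F` and `μ(dv) = (1 + θ d₁ φ₂(v)) G(dv)`. The lower
bound `c`, which concerns `φ₂` because `ψ = φ₂` almost everywhere by Lebesgue differentiation,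
makes `μ` and `G` mutually absolutely continuous, so both have the same right endpoint `β`.

For the independent product, `P(X V > x) = ∫ F̄(x / v) μ(dv)`. A shift of `x` by `t` shifts
`x / v` by `t / v ≥ t / β`, so `F̄` grows at least by the factor `exp (γ t / β)`. It cannot grow by
much more, since the values of `v` away from `β` (or, if `γ = 0`, close to `0`) contribute
negligibly.
-/

open scoped ENNReal Filter NNReal Topology

section Asymptotics

variable {α : Type*} {l : Filter α}

lemma isEquivalent_of_sub_isLittleO_add {f g : α → ℝ} (h : (f - g) =o[l] (f + g)) : f ~[l] g := by
  have hf : (f + f) ~[l] (f + g) := by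
    rwa [IsEquivalent, add_sub_add_left_eq_sub]
  have hg : (g + g) ~[l] (f + g) := by
    rw [IsEquivalent, add_sub_add_right_eq_sub, ← neg_sub]
    exact h.neg_left
  have half_smul : ∀ u : α → ℝ, (fun _ ↦ (2⁻¹ : ℝ)) * (u + u) = u := fun u ↦ by
    ext x
    simp only [Pi.mul_apply, Pi.add_apply]
    ring
  simpa only [half_smul] using (IsEquivalent.refl (u := fun _ ↦ (2⁻¹ : ℝ))).mul (hf.trans hg.symm)

lemma le_coe_mul_iff_toReal_le {a b : ℝ≥0∞} (ha : a ≠ ∞) (hb : b ≠ ∞) (q : ℝ≥0) :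
    a ≤ q * b ↔ a.toReal ≤ q * b.toReal := by
  rw [← ENNReal.toReal_le_toReal ha (ENNReal.mul_ne_top ENNReal.coe_ne_top hb),
    ENNReal.toReal_mul, ENNReal.coe_toReal]

lemma coe_mul_le_iff_le_toReal {a b : ℝ≥0∞} (ha : a ≠ ∞) (hb : b ≠ ∞) (q : ℝ≥0) :
    q * b ≤ a ↔ q * b.toReal ≤ a.toReal := by
  rw [← ENNReal.toReal_le_toReal (ENNReal.mul_ne_top ENNReal.coe_ne_top hb) ha,
    ENNReal.toReal_mul, ENNReal.coe_toReal]

variable {f g : α → ℝ≥0∞}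

lemma isLittleO_toReal_iff (hf : ∀ x, f x ≠ ∞) (hg : ∀ x, g x ≠ ∞) :
    (fun x ↦ (f x).toReal) =o[l] (fun x ↦ (g x).toReal) ↔
      ∀ ε : ℝ≥0, 0 < ε → ∀ᶠ x in l, f x ≤ ε * g x := by
  simp only [le_coe_mul_iff_toReal_le (hf _) (hg _), isLittleO_iff, Real.norm_eq_abs,
    ENNReal.abs_toReal, NNReal.forall, NNReal.coe_mk, ← NNReal.coe_pos]
  exact ⟨fun h ε _ hε ↦ h hε, fun h ε hε ↦ h ε hε.le hε⟩

lemma isEquivalent_const_mul_toReal_iff {C : ℝ} (hC : 0 < C) (hf : ∀ x, f x ≠ ∞)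
    (hg : ∀ x, g x ≠ ∞) :
    (fun x ↦ (f x).toReal) ~[l] (fun x ↦ C * (g x).toReal) ↔
      (∀ q : ℝ≥0, C < q → ∀ᶠ x in l, f x ≤ q * g x) ∧
        ∀ q : ℝ≥0, q < C → ∀ᶠ x in l, q * g x ≤ f x := by
  have norm_le_iff : ∀ (e : ℝ) (x : α), ‖(f x).toReal - C * (g x).toReal‖ ≤
      e * ‖C * (g x).toReal‖ ↔
      (C - e * C) * (g x).toReal ≤ (f x).toReal ∧ (f x).toReal ≤ (C + e * C) * (g x).toReal := by
    intro e x
    rw [Real.norm_of_nonneg (mul_nonneg hC.le ENNReal.toReal_nonneg), Real.norm_eq_abs, abs_le]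
    constructor <;> rintro ⟨h₁, h₂⟩ <;> constructor <;> linarith
  simp only [le_coe_mul_iff_toReal_le (hf _) (hg _),
    coe_mul_le_iff_le_toReal (hf _) (hg _), IsEquivalent, isLittleO_iff, Pi.sub_apply,
    norm_le_iff]
  constructor
  · intro h
    constructor <;> intro q hq
    · filter_upwards [h (div_pos (sub_pos.2 hq) hC)] with x hx
      simpa [div_mul_cancel₀ _ hC.ne'] using hx.2
    · filter_upwards [h (div_pos (sub_pos.2 hq) hC)] with x hx
      simpa [div_mul_cancel₀ _ hC.ne'] using hx.1
  · rintro ⟨hup, hlow⟩ e he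
    have heC : 0 < e * C := mul_pos he hC
    filter_upwards [hup ⟨C + e * C, by positivity⟩ (lt_add_of_pos_right C heC),
      hlow (C - e * C).toNNReal (by rw [Real.coe_toNNReal', max_lt_iff]; exact ⟨by linarith, hC⟩)]
      with x hxup hxlow
    exact ⟨(mul_le_mul_of_nonneg_right (Real.le_coe_toNNReal _) ENNReal.toReal_nonneg).trans hxlow,
      hxup⟩

lemma isEquivalent_toReal_of_le_add (hf : ∀ x, f x ≠ ∞) (hg : ∀ x, g x ≠ ∞)
    (hfg : ∀ ε : ℝ≥0, 0 < ε → ∀ᶠ x in l, f x ≤ g x + ε * (f x + g x))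
    (hgf : ∀ ε : ℝ≥0, 0 < ε → ∀ᶠ x in l, g x ≤ f x + ε * (f x + g x)) :
    (fun x ↦ (f x).toReal) ~[l] (fun x ↦ (g x).toReal) := by
  refine isEquivalent_of_sub_isLittleO_add (isLittleO_iff.2 fun e he ↦ ?_)
  lift e to ℝ≥0 using he.le
  have hsum : ∀ x, (e : ℝ≥0∞) * (f x + g x) ≠ ∞ := fun x ↦
    ENNReal.mul_ne_top ENNReal.coe_ne_top (ENNReal.add_ne_top.2 ⟨hf x, hg x⟩)
  filter_upwards [hfg e (NNReal.coe_pos.1 he), hgf e (NNReal.coe_pos.1 he)] with x hx₁ hx₂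
  have h₁ := ENNReal.toReal_mono (ENNReal.add_ne_top.2 ⟨hg x, hsum x⟩) hx₁
  have h₂ := ENNReal.toReal_mono (ENNReal.add_ne_top.2 ⟨hf x, hsum x⟩) hx₂
  rw [ENNReal.toReal_add (hg x) (hsum x)] at h₁
  rw [ENNReal.toReal_add (hf x) (hsum x)] at h₂
  rw [ENNReal.toReal_mul, ENNReal.toReal_add (hf x) (hg x), ENNReal.coe_toReal] at h₁ h₂
  rw [Pi.sub_apply, Pi.add_apply, Real.norm_eq_abs,
    Real.norm_of_nonneg (add_nonneg ENNReal.toReal_nonneg ENNReal.toReal_nonneg), abs_sub_le_iff]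
  exact ⟨by linarith, by linarith⟩

end Asymptotics

section MemLClass

/-- The class `L(γ)` for measures on the line: `V` charges every upper half-line and
`V (x - t, ∞) ~ exp (γ t) V (x, ∞)` as `x → ∞`. Shifts are allowed to be zero so that the
two cases `β = ∞` and `β < ∞` of a factor's right endpoint `β` can be treated alike. -/
structure MemLClass (V : Measure ℝ) (γ : ℝ) : Prop where
  tail_ne_zero : ∀ x, V (Ioi x) ≠ 0
  isEquivalent : ∀ t, 0 ≤ t →
    (fun x ↦ V.real (Ioi (x - t))) ~[atTop] (fun x ↦ Real.exp (γ * t) * V.real (Ioi x))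

namespace MemLClass

variable {V : Measure ℝ} [IsFiniteMeasure V] {γ t : ℝ}

lemma eventually_tail_sub_le (hV : MemLClass V γ) (ht : 0 ≤ t) {q : ℝ≥0}
    (hq : Real.exp (γ * t) < q) : ∀ᶠ x in atTop, V (Ioi (x - t)) ≤ q * V (Ioi x) :=
  ((isEquivalent_const_mul_toReal_iff (Real.exp_pos _) (fun _ ↦ measure_ne_top V _)
    fun _ ↦ measure_ne_top V _).1 (hV.isEquivalent t ht)).1 q hq

lemma eventually_le_tail_sub (hV : MemLClass V γ) (ht : 0 ≤ t) {q : ℝ≥0}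
    (hq : q < Real.exp (γ * t)) : ∀ᶠ x in atTop, q * V (Ioi x) ≤ V (Ioi (x - t)) :=
  ((isEquivalent_const_mul_toReal_iff (Real.exp_pos _) (fun _ ↦ measure_ne_top V _)
    fun _ ↦ measure_ne_top V _).1 (hV.isEquivalent t ht)).2 q hq

lemma congr {W : Measure ℝ} (hV : MemLClass V γ)
    (h : (fun x ↦ W.real (Ioi x)) ~[atTop] (fun x ↦ V.real (Ioi x))) : MemLClass W γ where
  tail_ne_zero x hx := by
    have hW : (fun x ↦ W.real (Ioi x)) =ᶠ[atTop] 0 := by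
      filter_upwards [eventually_ge_atTop x] with y hy
      simp [measureReal_def, measure_mono_null (Ioi_subset_Ioi hy) hx]
    have hzero := isEquivalent_zero_iff_eventually_zero.1 (h.symm.trans_eventuallyEq hW)
    obtain ⟨y, hy⟩ := hzero.exists
    simp [measureReal_eq_zero_iff, hV.tail_ne_zero] at hy
  isEquivalent t ht := by
    have hshift : Tendsto (fun x : ℝ ↦ x - t) atTop atTop :=
      tendsto_atTop_add_const_right _ (-t) tendsto_id
    exact ((h.comp_tendsto hshift).trans (hV.isEquivalent t ht)).trans
      ((IsEquivalent.refl (u := fun _ ↦ Real.exp (γ * t))).mul h.symm)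

/-- Tails of class `L(γ)` with `γ > 0` are rapidly varying. -/
lemma eventually_mul_tail_le (hV : MemLClass V γ) (hγ : 0 < γ) {a b : ℝ} (ha : 0 < a)
    (hab : a < b) (s : ℝ) (K : ℝ≥0) :
    ∀ᶠ x in atTop, K * V (Ioi (x * b - s)) ≤ V (Ioi (x * a)) := by
  obtain ⟨σ, hσ, hKσ⟩ : ∃ σ ≥ 0, (K : ℝ) < Real.exp (γ * σ) :=
    ⟨K / γ, by positivity, by
      rw [mul_div_cancel₀ _ hγ.ne']
      linarith [Real.add_one_le_exp (K : ℝ)]⟩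
  have hto : Tendsto (fun x : ℝ ↦ x * a + σ) atTop atTop :=
    tendsto_atTop_add_const_right _ _ (tendsto_id.atTop_mul_const ha)
  have hgap : Tendsto (fun x : ℝ ↦ x * (b - a)) atTop atTop :=
    tendsto_id.atTop_mul_const (sub_pos.2 hab)
  filter_upwards [hto.eventually (hV.eventually_le_tail_sub hσ hKσ),
    hgap.eventually_ge_atTop (σ + s)] with x hx hxgap
  rw [add_sub_cancel_right] at hx
  refine le_trans ?_ hx
  gcongr
  linarith

end MemLClass

lemma rvTail_eq_measureReal_map {Ω : Type*} [MeasureSpace Ω] {Z : Ω → ℝ} (hZ : Measurable Z)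
    (x : ℝ) : rvTail Z x = (Measure.map Z ℙ).real (Ioi x) := by
  rw [map_measureReal_apply hZ measurableSet_Ioi]
  rfl

lemma memLGamma_iff_memLClass_map {Ω : Type*} [MeasureSpace Ω]
    [IsFiniteMeasure (ℙ : Measure Ω)] {Z : Ω → ℝ} (hZ : Measurable Z) {γ : ℝ} :
    MemLGamma Z γ ↔ MemLClass (Measure.map Z ℙ) γ := by
  simp only [MemLGamma, UnboundedDist, rvTail_eq_measureReal_map hZ]
  constructor
  · rintro ⟨hunb, hequiv⟩
    refine ⟨fun x hx ↦ ?_, fun t ht ↦ ?_⟩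
    · have hpos : (0 : ℝ) < max x 1 := lt_max_of_lt_right one_pos
      have hzero := measure_mono_null (Ioi_subset_Ioi (le_max_left x 1)) hx
      exact (hunb _ hpos).ne' (by simp [measureReal_def, hzero])
    · rcases ht.eq_or_lt with rfl | ht
      · simpa using IsEquivalent.refl
      · exact hequiv t ht
  · rintro ⟨hne, hequiv⟩
    exact ⟨fun x _ ↦ measureReal_nonneg.lt_of_ne' (by simp [measureReal_eq_zero_iff, hne]),
      fun t ht ↦ hequiv t ht.le⟩

end MemLClass

section ProductTail

/-- `κ = 1 / β` for the right endpoint `β` of `μ`, with `κ = 0` when `β = ∞`. -/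
structure IsRecipEndpoint (μ : Measure ℝ) (κ : ℝ) : Prop where
  nonneg : 0 ≤ κ
  ae_mul_le_one : ∀ᵐ v ∂μ, κ * v ≤ 1
  tail_inv_ne_zero : ∀ r, κ < r → μ (Ioi r⁻¹) ≠ 0

lemma IsRecipEndpoint.congr {μ ν : Measure ℝ} {κ : ℝ} (h : IsRecipEndpoint μ κ) (hνμ : ν ≪ μ)
    (hμν : μ ≪ ν) : IsRecipEndpoint ν κ :=
  ⟨h.nonneg, hνμ.ae_le h.ae_mul_le_one, fun r hr h₀ ↦ h.tail_inv_ne_zero r hr (hμν h₀)⟩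

variable {F μ : Measure ℝ}

lemma measurableSet_lt_fst_mul_snd (x : ℝ) : MeasurableSet {p : ℝ × ℝ | x < p.1 * p.2} :=
  measurableSet_lt measurable_const (measurable_fst.mul measurable_snd)

lemma mconv_Ioi (F μ : Measure ℝ) (x : ℝ) :
    (F ∗ₘ μ) (Ioi x) = (F.prod μ) {p | x < p.1 * p.2} :=
  Measure.map_apply (by fun_prop) measurableSet_Ioi

lemma mconv_Ioi_eq_setLIntegral [SFinite F] [SFinite μ] (hμ : ∀ᵐ v ∂μ, 0 ≤ v) {x : ℝ}
    (hx : 0 ≤ x) : (F ∗ₘ μ) (Ioi x) = ∫⁻ v in Ioi 0, F (Ioi (x / v)) ∂μ := by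
  rw [mconv_Ioi, Measure.prod_apply_symm (measurableSet_lt_fst_mul_snd x),
    ← lintegral_indicator measurableSet_Ioi]
  refine lintegral_congr_ae ?_
  filter_upwards [hμ] with v hv
  rcases hv.eq_or_lt with rfl | hv
  · simp [not_lt.2 hx]
  · rw [indicator_of_mem (mem_Ioi.2 hv)]
    congr 1
    ext u
    simp [div_lt_iff₀ hv]

lemma measure_mul_le_mconv_Ioi [SFinite μ] {x r : ℝ} (hx : 0 ≤ x) (hr : 0 < r) :
    F (Ioi (x * r)) * μ (Ioi r⁻¹) ≤ (F ∗ₘ μ) (Ioi x) := by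
  rw [mconv_Ioi, ← Measure.prod_prod]
  refine measure_mono fun p hp ↦ ?_
  calc x = x * r * r⁻¹ := by field_simp
    _ < p.1 * p.2 := mul_lt_mul'' hp.1 hp.2 (by positivity) (by positivity)

lemma mconv_tail_ne_zero [SFinite μ] (hF : ∀ x, F (Ioi x) ≠ 0) {κ : ℝ}
    (hκ : IsRecipEndpoint μ κ) (x : ℝ) : (F ∗ₘ μ) (Ioi x) ≠ 0 := fun h₀ ↦ by
  have hκ₁ : 0 < κ + 1 := by linarith [hκ.nonneg]
  have hmax := measure_mono_null (Ioi_subset_Ioi (le_max_left x 0)) h₀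
  have hle := (measure_mul_le_mconv_Ioi (F := F) (μ := μ) (le_max_right x 0) hκ₁).trans_eq hmax
  exact mul_ne_zero (hF _) (hκ.tail_inv_ne_zero _ (lt_add_one κ)) (nonpos_iff_eq_zero.1 hle)

lemma setLIntegral_tail_div_le_measure [IsProbabilityMeasure F] (s : Set ℝ) (x : ℝ) :
    ∫⁻ v in s, F (Ioi (x / v)) ∂μ ≤ μ s :=
  (lintegral_mono fun _ ↦ prob_le_one).trans_eq (setLIntegral_one s)

lemma setLIntegral_tail_div_Ioc_le {x r : ℝ} (hx : 0 ≤ x) (hr : 0 < r) :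
    ∫⁻ v in Ioc 0 r⁻¹, F (Ioi (x / v)) ∂μ ≤ F (Ioi (x * r)) * μ (Ioc 0 r⁻¹) := by
  rw [← setLIntegral_const]
  refine setLIntegral_mono' measurableSet_Ioc fun v hv ↦ measure_mono (Ioi_subset_Ioi ?_)
  rw [div_eq_mul_inv]
  gcongr
  exact (le_inv_comm₀ hr hv.1).2 hv.2

lemma setLIntegral_tail_div_le_mconv [SFinite F] [SFinite μ] (hμ : ∀ᵐ v ∂μ, 0 ≤ v) {x : ℝ}
    (hx : 0 ≤ x) {s : Set ℝ} (hs : s ⊆ Ioi 0) :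
    ∫⁻ v in s, F (Ioi (x / v)) ∂μ ≤ (F ∗ₘ μ) (Ioi x) :=
  (lintegral_mono_set hs).trans_eq (mconv_Ioi_eq_setLIntegral hμ hx).symm

lemma mconv_Ioi_le_setLIntegral_add [IsProbabilityMeasure F] [SFinite μ] (hμ : ∀ᵐ v ∂μ, 0 ≤ v)
    {x : ℝ} (hx : 0 ≤ x) (b : ℝ) :
    (F ∗ₘ μ) (Ioi x) ≤ ∫⁻ v in Ioc 0 b, F (Ioi (x / v)) ∂μ + μ (Ioi b) := by
  rw [mconv_Ioi_eq_setLIntegral hμ hx]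
  have hsub : Ioi (0 : ℝ) ⊆ Ioc 0 b ∪ Ioi b := Ioi_subset_Ioc_union_Ioi
  refine (lintegral_mono_set hsub).trans ((lintegral_union_le _ _ _).trans ?_)
  gcongr
  exact setLIntegral_tail_div_le_measure _ _

variable {γ κ t : ℝ}

lemma eventually_setLIntegral_Ioc_le_of_pos [IsFiniteMeasure F] [IsFiniteMeasure μ]
    (hF : MemLClass F γ) (hγ : 0 < γ) (hκ : IsRecipEndpoint μ κ) {r : ℝ} (hr : κ < r) (t : ℝ)
    {δ : ℝ≥0} (hδ : 0 < δ) :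
    ∀ᶠ x in atTop, ∫⁻ v in Ioc 0 r⁻¹, F (Ioi ((x - t) / v)) ∂μ ≤ δ * (F ∗ₘ μ) (Ioi x) := by
  have hκ₀ := hκ.nonneg
  obtain ⟨r', hκr', hr'⟩ := exists_between hr
  have hr₀ : 0 < r := hκ₀.trans_lt hr
  have hr'₀ : 0 < r' := hκ₀.trans_lt hκr'
  set w := μ (Ioi r'⁻¹)
  have hw : (δ : ℝ≥0∞) * w ≠ 0 :=
    mul_ne_zero (ENNReal.coe_ne_zero.2 hδ.ne') (hκ.tail_inv_ne_zero _ hκr')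
  have hw_top : (δ : ℝ≥0∞) * w ≠ ∞ := ENNReal.mul_ne_top ENNReal.coe_ne_top (measure_ne_top _ _)
  set K := (μ (Ioc 0 r⁻¹) / (δ * w)).toNNReal
  have hK : μ (Ioc 0 r⁻¹) = K * (δ * w) := by
    rw [ENNReal.coe_toNNReal (ENNReal.div_ne_top (measure_ne_top _ _) hw),
      ENNReal.div_mul_cancel hw hw_top]
  filter_upwards [hF.eventually_mul_tail_le hγ hr'₀ hr' (t * r) K, eventually_ge_atTop 0,
    eventually_ge_atTop t] with x hx hx₀ hxt
  calc ∫⁻ v in Ioc 0 r⁻¹, F (Ioi ((x - t) / v)) ∂μ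
      ≤ F (Ioi ((x - t) * r)) * μ (Ioc 0 r⁻¹) :=
        setLIntegral_tail_div_Ioc_le (sub_nonneg.2 hxt) hr₀
    _ = δ * (K * F (Ioi (x * r - t * r)) * w) := by rw [hK, sub_mul]; ring
    _ ≤ δ * (F (Ioi (x * r')) * w) := by gcongr
    _ ≤ δ * (F ∗ₘ μ) (Ioi x) := by gcongr; exact measure_mul_le_mconv_Ioi hx₀ hr'₀

lemma tendsto_measure_Ioc_zero_inv_atTop (μ : Measure ℝ) [IsFiniteMeasure μ] :
    Tendsto (fun r : ℝ ↦ μ (Ioc 0 r⁻¹)) atTop (𝓝 0) := by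
  have h := tendsto_measure_biInter_gt (μ := μ) (s := fun w : ℝ ↦ Ioc 0 w) (a := 0)
    (fun _ _ ↦ measurableSet_Ioc.nullMeasurableSet) (fun _ _ _ hij ↦ Ioc_subset_Ioc_right hij)
    ⟨1, one_pos, measure_ne_top _ _⟩
  have hempty : ⋂ w > (0 : ℝ), Ioc 0 w = ∅ := by
    refine eq_empty_of_forall_notMem fun v hv ↦ ?_
    simp only [mem_iInter, mem_Ioc] at hv
    have hv₀ := (hv 1 one_pos).1
    linarith [(hv (v / 2) (half_pos hv₀)).2]
  rw [hempty, measure_empty] at h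
  exact h.comp tendsto_inv_atTop_nhdsGT_zero

lemma eventually_setLIntegral_Ioc_le_of_zero [IsFiniteMeasure F] [IsFiniteMeasure μ]
    (hF : MemLClass F 0) (hκ : IsRecipEndpoint μ κ) (ht : 0 ≤ t) {δ : ℝ≥0} (hδ : 0 < δ) :
    ∀ᶠ r in atTop, ∀ᶠ x in atTop,
      ∫⁻ v in Ioc 0 r⁻¹, F (Ioi ((x - t) / v)) ∂μ ≤ δ * (F ∗ₘ μ) (Ioi x) := by
  set w := μ (Ioi (κ + 1)⁻¹)
  have hκ₁ : 0 < κ + 1 := by linarith [hκ.nonneg]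
  have hw : 0 < ((δ / 2 : ℝ≥0) : ℝ≥0∞) * w :=
    ENNReal.mul_pos (by positivity) (hκ.tail_inv_ne_zero _ (lt_add_one κ))
  filter_upwards [(tendsto_measure_Ioc_zero_inv_atTop μ).eventually_le_const hw,
    eventually_ge_atTop (κ + 1)] with r hrw hr
  have hr₀ : 0 < r := hκ₁.trans_le hr
  have hto : Tendsto (fun x : ℝ ↦ x * r) atTop atTop := tendsto_id.atTop_mul_const hr₀
  filter_upwards [hto.eventually (hF.eventually_tail_sub_le (t := t * r) (q := 2) (by positivity)
    (by simp)), eventually_ge_atTop 0, eventually_ge_atTop t] with x hx hx₀ hxt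
  calc ∫⁻ v in Ioc 0 r⁻¹, F (Ioi ((x - t) / v)) ∂μ
      ≤ F (Ioi (x * r - t * r)) * μ (Ioc 0 r⁻¹) := by
        rw [← sub_mul]
        exact setLIntegral_tail_div_Ioc_le (sub_nonneg.2 hxt) hr₀
    _ ≤ ((2 : ℝ≥0) * F (Ioi (x * r))) * ((δ / 2 : ℝ≥0) * w) := by gcongr
    _ = ((2 * (δ / 2) : ℝ≥0) : ℝ≥0∞) * (F (Ioi (x * r)) * w) := by push_cast; ring
    _ = δ * (F (Ioi (x * r)) * w) := by rw [mul_div_cancel₀ _ two_ne_zero]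
    _ ≤ δ * (F (Ioi (x * r)) * μ (Ioi r⁻¹)) := by
        gcongr
        exact measure_mono (Ioi_subset_Ioi (by gcongr))
    _ ≤ δ * (F ∗ₘ μ) (Ioi x) := by gcongr; exact measure_mul_le_mconv_Ioi hx₀ hr₀

lemma exists_eventually_setLIntegral_Ioc_le [IsFiniteMeasure F] [IsFiniteMeasure μ]
    (hF : MemLClass F γ) (hγ : 0 ≤ γ) (hκ : IsRecipEndpoint μ κ) (ht : 0 ≤ t) {q : ℝ}
    (hq : Real.exp (γ * (t * κ)) < q) {δ : ℝ≥0} (hδ : 0 < δ) :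
    ∃ r > 0, Real.exp (γ * (t * r)) < q ∧ ∀ᶠ x in atTop,
      ∫⁻ v in Ioc 0 r⁻¹, F (Ioi ((x - t) / v)) ∂μ ≤ δ * (F ∗ₘ μ) (Ioi x) := by
  rcases hγ.eq_or_lt with rfl | hγ
  · obtain ⟨r, hr, hr₀⟩ := ((eventually_setLIntegral_Ioc_le_of_zero hF hκ ht hδ).and
      (eventually_gt_atTop 0)).exists
    exact ⟨r, hr₀, by simpa only [zero_mul] using hq, hr⟩
  · have hcont : Continuous fun r : ℝ ↦ Real.exp (γ * (t * r)) := by fun_prop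
    obtain ⟨r, hrq, hr⟩ := (((hcont.tendsto κ).eventually_lt_const hq).filter_mono
      nhdsWithin_le_nhds |>.and (self_mem_nhdsWithin (s := Ioi κ))).exists
    exact ⟨r, hκ.nonneg.trans_lt hr, hrq,
      eventually_setLIntegral_Ioc_le_of_pos hF hγ hκ hr t hδ⟩

lemma setLIntegral_Ioc_tail_sub_div_le [SFinite F] [SFinite μ] (hμ : ∀ᵐ v ∂μ, 0 ≤ v)
    (ht : 0 ≤ t) {r a x : ℝ} (hr : 0 < r) (ha : 0 < a) {q : ℝ≥0}
    (hq : ∀ z, a ≤ z → F (Ioi (z - t * r)) ≤ q * F (Ioi z)) (hx : 0 ≤ x) :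
    ∫⁻ v in Ioc r⁻¹ (a⁻¹ * x), F (Ioi ((x - t) / v)) ∂μ ≤ q * (F ∗ₘ μ) (Ioi x) := by
  have hsub : Ioc r⁻¹ (a⁻¹ * x) ⊆ Ioi 0 := fun v hv ↦ (inv_pos.2 hr).trans hv.1
  calc ∫⁻ v in Ioc r⁻¹ (a⁻¹ * x), F (Ioi ((x - t) / v)) ∂μ
      ≤ ∫⁻ v in Ioc r⁻¹ (a⁻¹ * x), q * F (Ioi (x / v)) ∂μ := by
        refine setLIntegral_mono' measurableSet_Ioc fun v hv ↦ ?_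
        have hv₀ : 0 < v := hsub hv
        have haz : a ≤ x / v := (le_div_comm₀ ha hv₀).2 (by simpa [div_eq_inv_mul] using hv.2)
        refine (measure_mono (Ioi_subset_Ioi ?_)).trans (hq _ haz)
        rw [sub_div, div_eq_mul_inv t]
        gcongr
        exact inv_le_of_inv_le₀ hr hv.1.le
    _ = q * ∫⁻ v in Ioc r⁻¹ (a⁻¹ * x), F (Ioi (x / v)) ∂μ :=
        lintegral_const_mul' _ _ ENNReal.coe_ne_top
    _ ≤ q * (F ∗ₘ μ) (Ioi x) := by gcongr; exact setLIntegral_tail_div_le_mconv hμ hx hsub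

lemma le_setLIntegral_Ioc_tail_sub_div (hκ : ∀ᵐ v ∂μ, κ * v ≤ 1) (ht : 0 ≤ t) {a x : ℝ}
    (ha : 0 < a) {q : ℝ≥0} (hq : ∀ z, a ≤ z → q * F (Ioi z) ≤ F (Ioi (z - t * κ))) :
    q * ∫⁻ v in Ioc 0 (a⁻¹ * x), F (Ioi (x / v)) ∂μ ≤
      ∫⁻ v in Ioc 0 (a⁻¹ * x), F (Ioi ((x - t) / v)) ∂μ := by
  rw [← lintegral_const_mul' _ _ ENNReal.coe_ne_top]
  refine lintegral_mono_ae ?_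
  filter_upwards [ae_restrict_mem measurableSet_Ioc, ae_restrict_of_ae hκ] with v hv hκv
  have hv₀ : 0 < v := hv.1
  have haz : a ≤ x / v := (le_div_comm₀ ha hv₀).2 (by simpa [div_eq_inv_mul] using hv.2)
  refine (hq _ haz).trans (measure_mono (Ioi_subset_Ioi ?_))
  rw [sub_div, div_eq_mul_inv t]
  gcongr
  rwa [← one_div, le_div_iff₀ hv₀]

section

variable [IsProbabilityMeasure F] [IsFiniteMeasure μ]

lemma eventually_mconv_tail_sub_le (hF : MemLClass F γ) (hγ : 0 ≤ γ) (hκ : IsRecipEndpoint μ κ)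
    (hμ : ∀ᵐ v ∂μ, 0 ≤ v)
    (htail : ∀ b > 0, ∀ δ : ℝ≥0, 0 < δ → ∀ᶠ x in atTop, μ (Ioi (b * x)) ≤ δ * (F ∗ₘ μ) (Ioi x))
    (ht : 0 ≤ t) {q : ℝ≥0} (hq : Real.exp (γ * (t * κ)) < q) :
    ∀ᶠ x in atTop, (F ∗ₘ μ) (Ioi (x - t)) ≤ q * (F ∗ₘ μ) (Ioi x) := by
  obtain ⟨q', hq', hqq'⟩ := exists_between hq
  lift q' to ℝ≥0 using (Real.exp_pos _).le.trans hq'.le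
  rw [NNReal.coe_lt_coe] at hqq'
  have hδ : 0 < (q - q') / 2 := half_pos (tsub_pos_of_lt hqq')
  obtain ⟨r, hr, hrq, hsmall⟩ := exists_eventually_setLIntegral_Ioc_le hF hγ hκ ht hq' hδ
  obtain ⟨a, ha⟩ := ((hF.eventually_tail_sub_le (by positivity) hrq).and
    (eventually_gt_atTop 0)).exists_forall_of_atTop
  have ha₀ : 0 < a := (ha a le_rfl).2
  filter_upwards [hsmall, htail a⁻¹ (inv_pos.2 ha₀) _ hδ, eventually_ge_atTop 0,
    eventually_ge_atTop t] with x hx_small hx_large hx hxt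
  have hsub : Ioc 0 (a⁻¹ * x) ⊆ Ioc 0 r⁻¹ ∪ Ioc r⁻¹ (a⁻¹ * x) := Ioc_subset_Ioc_union_Ioc
  calc (F ∗ₘ μ) (Ioi (x - t))
      ≤ ∫⁻ v in Ioc 0 (a⁻¹ * x), F (Ioi ((x - t) / v)) ∂μ + μ (Ioi (a⁻¹ * x)) :=
        mconv_Ioi_le_setLIntegral_add hμ (sub_nonneg.2 hxt) _
    _ ≤ ∫⁻ v in Ioc 0 r⁻¹, F (Ioi ((x - t) / v)) ∂μ +
          ∫⁻ v in Ioc r⁻¹ (a⁻¹ * x), F (Ioi ((x - t) / v)) ∂μ + μ (Ioi (a⁻¹ * x)) := by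
        gcongr
        exact (lintegral_mono_set hsub).trans (lintegral_union_le _ _ _)
    _ ≤ ((q - q') / 2 : ℝ≥0) * (F ∗ₘ μ) (Ioi x) + q' * (F ∗ₘ μ) (Ioi x) +
          ((q - q') / 2 : ℝ≥0) * (F ∗ₘ μ) (Ioi x) := by
        gcongr
        exact setLIntegral_Ioc_tail_sub_div_le hμ ht hr ha₀ (fun z hz ↦ (ha z hz).1) hx
    _ = (((q - q') / 2 + q' + (q - q') / 2 : ℝ≥0) : ℝ≥0∞) * (F ∗ₘ μ) (Ioi x) := by
        push_cast; ring
    _ = q * (F ∗ₘ μ) (Ioi x) := by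
        rw [add_right_comm, add_halves, tsub_add_cancel_of_le hqq'.le]

lemma eventually_le_mconv_tail_sub (hF : MemLClass F γ) (hκ : IsRecipEndpoint μ κ)
    (hμ : ∀ᵐ v ∂μ, 0 ≤ v)
    (htail : ∀ b > 0, ∀ δ : ℝ≥0, 0 < δ → ∀ᶠ x in atTop, μ (Ioi (b * x)) ≤ δ * (F ∗ₘ μ) (Ioi x))
    (ht : 0 ≤ t) {q : ℝ≥0} (hq : q < Real.exp (γ * (t * κ))) :
    ∀ᶠ x in atTop, q * (F ∗ₘ μ) (Ioi x) ≤ (F ∗ₘ μ) (Ioi (x - t)) := by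
  obtain ⟨q', hqq', hq'⟩ := exists_between hq
  lift q' to ℝ≥0 using q.2.trans hqq'.le
  rw [NNReal.coe_lt_coe] at hqq'
  have hq'₀ : 0 < q' := pos_of_gt hqq'
  have hδ : 0 < (q' - q) / q' := div_pos (tsub_pos_of_lt hqq') hq'₀
  obtain ⟨a, ha⟩ := ((hF.eventually_le_tail_sub (mul_nonneg ht hκ.nonneg) hq').and
    (eventually_gt_atTop 0)).exists_forall_of_atTop
  have ha₀ : 0 < a := (ha a le_rfl).2
  filter_upwards [htail a⁻¹ (inv_pos.2 ha₀) _ hδ, eventually_ge_atTop 0,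
    eventually_ge_atTop t] with x hx_large hx hxt
  have key : q * (F ∗ₘ μ) (Ioi x) + ((q' - q : ℝ≥0) : ℝ≥0∞) * (F ∗ₘ μ) (Ioi x) ≤
      (F ∗ₘ μ) (Ioi (x - t)) + ((q' - q : ℝ≥0) : ℝ≥0∞) * (F ∗ₘ μ) (Ioi x) :=
    calc q * (F ∗ₘ μ) (Ioi x) + ((q' - q : ℝ≥0) : ℝ≥0∞) * (F ∗ₘ μ) (Ioi x)
        = q' * (F ∗ₘ μ) (Ioi x) := by
          rw [← add_mul, ← ENNReal.coe_add, add_tsub_cancel_of_le hqq'.le]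
      _ ≤ q' * (∫⁻ v in Ioc 0 (a⁻¹ * x), F (Ioi (x / v)) ∂μ + μ (Ioi (a⁻¹ * x))) := by
          gcongr
          exact mconv_Ioi_le_setLIntegral_add hμ hx _
      _ ≤ ∫⁻ v in Ioc 0 (a⁻¹ * x), F (Ioi ((x - t) / v)) ∂μ +
            q' * (((q' - q) / q' : ℝ≥0) * (F ∗ₘ μ) (Ioi x)) := by
          rw [mul_add]
          gcongr
          exact le_setLIntegral_Ioc_tail_sub_div hκ.ae_mul_le_one ht ha₀ fun z hz ↦ (ha z hz).1
      _ ≤ (F ∗ₘ μ) (Ioi (x - t)) + ((q' - q : ℝ≥0) : ℝ≥0∞) * (F ∗ₘ μ) (Ioi x) := by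
          rw [← mul_assoc, ← ENNReal.coe_mul, mul_div_cancel₀ _ hq'₀.ne']
          gcongr
          exact setLIntegral_tail_div_le_mconv hμ (sub_nonneg.2 hxt) Ioc_subset_Ioi_self
  exact (ENNReal.add_le_add_iff_right
    (ENNReal.mul_ne_top ENNReal.coe_ne_top (measure_ne_top _ _))).1 key

theorem MemLClass.mconv (hF : MemLClass F γ) (hγ : 0 ≤ γ) (hκ : IsRecipEndpoint μ κ)
    (hμ : ∀ᵐ v ∂μ, 0 ≤ v)
    (htail : ∀ b > 0, (fun x ↦ μ.real (Ioi (b * x))) =o[atTop]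
      fun x ↦ (F ∗ₘ μ).real (Ioi x)) :
    MemLClass (F ∗ₘ μ) (γ * κ) where
  tail_ne_zero := mconv_tail_ne_zero hF.tail_ne_zero hκ
  isEquivalent t ht := by
    have htail' : ∀ b > 0, ∀ δ : ℝ≥0, 0 < δ → ∀ᶠ x in atTop,
        μ (Ioi (b * x)) ≤ δ * (F ∗ₘ μ) (Ioi x) := fun b hb ↦
      (isLittleO_toReal_iff (fun _ ↦ measure_ne_top _ _) fun _ ↦ measure_ne_top _ _).1 (htail b hb)
    rw [mul_assoc, mul_comm κ]
    exact (isEquivalent_const_mul_toReal_iff (Real.exp_pos _) (fun _ ↦ measure_ne_top _ _)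
      fun _ ↦ measure_ne_top _ _).2 ⟨fun _ ↦ eventually_mconv_tail_sub_le hF hγ hκ hμ htail' ht,
        fun _ ↦ eventually_le_mconv_tail_sub hF hκ hμ htail' ht⟩

end

end ProductTail

section FstTailLE

/-- `J` is asymptotically dominated by `K` far out in the first coordinate: every factor larger
than `1` bounds `J` by a multiple of `K` on some half-plane `(a, ∞) × ℝ`. -/
def FstTailLE (J K : Measure (ℝ × ℝ)) : Prop :=
  ∀ ε : ℝ≥0, 0 < ε → ∀ᶠ a in atTop, J.restrict {p | a < p.1} ≤ (1 + ε) • K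

variable {F μ : Measure ℝ} {J K : Measure (ℝ × ℝ)}

lemma map_mul_Ioi (J : Measure (ℝ × ℝ)) (x : ℝ) :
    J.map (fun p ↦ p.1 * p.2) (Ioi x) = J {p | x < p.1 * p.2} :=
  Measure.map_apply (by fun_prop) measurableSet_Ioi

lemma map_mul_Ioi_le_restrict_add (hJ : ∀ᵐ v ∂J.snd, 0 ≤ v) {a : ℝ} (ha : 0 < a) (x : ℝ) :
    J.map (fun p ↦ p.1 * p.2) (Ioi x) ≤
      J.restrict {p | a < p.1} {p | x < p.1 * p.2} + J.snd (Ioi (a⁻¹ * x)) := by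
  rw [map_mul_Ioi, Measure.restrict_apply (measurableSet_lt_fst_mul_snd x),
    Measure.snd_apply measurableSet_Ioi]
  refine (measure_mono_ae ?_).trans (measure_union_le _ _)
  filter_upwards [ae_of_ae_map measurable_snd.aemeasurable hJ] with p hp hxp
  rcases lt_or_ge a p.1 with hap | hap
  · exact Or.inl ⟨hxp, hap⟩
  · refine Or.inr ((inv_mul_lt_iff₀ ha).2 (hxp.trans_le ?_))
    gcongr

lemma FstTailLE.eventually_map_mul_Ioi_le (h : FstTailLE J K) (hJ : ∀ᵐ v ∂J.snd, 0 ≤ v)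
    {f : ℝ → ℝ≥0∞}
    (hf : ∀ b > 0, ∀ δ : ℝ≥0, 0 < δ → ∀ᶠ x in atTop, J.snd (Ioi (b * x)) ≤ δ * f x)
    {ε : ℝ≥0} (hε : 0 < ε) :
    ∀ᶠ x in atTop, J.map (fun p ↦ p.1 * p.2) (Ioi x) ≤
      (1 + ε) * K.map (fun p ↦ p.1 * p.2) (Ioi x) + ε * f x := by
  obtain ⟨a, hJK, ha⟩ := ((h ε hε).and (eventually_gt_atTop 0)).exists
  filter_upwards [hf a⁻¹ (inv_pos.2 ha) ε hε] with x hx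
  refine (map_mul_Ioi_le_restrict_add hJ ha x).trans (add_le_add ?_ hx)
  simpa [map_mul_Ioi, ENNReal.smul_def] using hJK {p | x < p.1 * p.2}

lemma FstTailLE.exists_le_smul_snd [IsFiniteMeasure F] [SFinite μ] (h : FstTailLE (F.prod μ) J)
    (hF : ∀ a, F (Ioi a) ≠ 0) : ∃ C : ℝ≥0, μ ≤ C • J.snd := by
  obtain ⟨a, ha⟩ := (h 1 one_pos).exists
  have hC : 2 / F (Ioi a) ≠ ∞ := ENNReal.div_ne_top ENNReal.ofNat_ne_top (hF a)
  refine ⟨(2 / F (Ioi a)).toNNReal, Measure.le_iff.2 fun s hs ↦ ?_⟩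
  have hprod : F (Ioi a) * μ s ≤ 2 * J.snd s :=
    calc F (Ioi a) * μ s = (F.prod μ).restrict {p | a < p.1} (Prod.snd ⁻¹' s) := by
          rw [Measure.restrict_apply (measurable_snd hs), ← Measure.prod_prod]
          congr 1
          ext p
          simp [and_comm]
      _ ≤ ((1 + 1 : ℝ≥0) • J) (Prod.snd ⁻¹' s) := ha _
      _ = 2 * J.snd s := by
          rw [Measure.snd_apply hs, one_add_one_eq_two]
          rfl
  calc μ s ≤ 2 * J.snd s / F (Ioi a) :=
        ENNReal.le_div_iff_mul_le (.inl (hF a)) (.inl (measure_ne_top _ _)) |>.2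
          (by rwa [mul_comm])
    _ = ((2 / F (Ioi a)).toNNReal • J.snd) s := by
        rw [Measure.smul_apply, ENNReal.smul_def, ENNReal.coe_toNNReal hC, smul_eq_mul,
          ENNReal.mul_div_right_comm]

lemma isBigO_measureReal_of_le_smul {α ι : Type*} [MeasurableSpace α] {μ ν : Measure α}
    [IsFiniteMeasure ν] {C : ℝ≥0} (h : μ ≤ C • ν) (s : ι → Set α) (l : Filter ι) :
    (fun i ↦ μ.real (s i)) =O[l] fun i ↦ ν.real (s i) := by
  refine IsBigO.of_bound C (Eventually.of_forall fun i ↦ ?_)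
  rw [Real.norm_of_nonneg measureReal_nonneg, Real.norm_of_nonneg measureReal_nonneg]
  simpa [measureReal_def] using ENNReal.toReal_mono (measure_ne_top _ _) (h (s i))

variable [IsProbabilityMeasure F] [IsFiniteMeasure μ] [IsFiniteMeasure J]

lemma isEquivalent_map_mul_mconv (hJμ : FstTailLE J (F.prod μ))
    (hμJ : FstTailLE (F.prod μ) J) (hJ : ∀ᵐ v ∂J.snd, 0 ≤ v) (hμ : ∀ᵐ v ∂μ, 0 ≤ v)
    (hJtail : ∀ b > 0, (fun x ↦ J.snd.real (Ioi (b * x))) =o[atTop]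
      fun x ↦ (J.map fun p ↦ p.1 * p.2).real (Ioi x))
    (hμtail : ∀ b > 0, (fun x ↦ μ.real (Ioi (b * x))) =o[atTop]
      fun x ↦ (J.map fun p ↦ p.1 * p.2).real (Ioi x)) :
    (fun x ↦ (J.map fun p ↦ p.1 * p.2).real (Ioi x)) ~[atTop]
      fun x ↦ (F ∗ₘ μ).real (Ioi x) := by
  refine isEquivalent_toReal_of_le_add (fun _ ↦ measure_ne_top _ _) (fun _ ↦ measure_ne_top _ _)
    (fun ε hε ↦ ?_) fun ε hε ↦ ?_
  · filter_upwards [hJμ.eventually_map_mul_Ioi_le hJ (fun b hb ↦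
      (isLittleO_toReal_iff (fun _ ↦ measure_ne_top _ _) fun _ ↦ measure_ne_top _ _).1
        (hJtail b hb)) hε] with x hx
    refine hx.trans_eq ?_
    rw [Measure.mconv]
    ring
  · have hμ' : ∀ᵐ v ∂(F.prod μ).snd, 0 ≤ v := by rwa [Measure.snd_prod]
    filter_upwards [hμJ.eventually_map_mul_Ioi_le hμ' (fun b hb ↦ by
      rw [Measure.snd_prod]
      exact (isLittleO_toReal_iff (fun _ ↦ measure_ne_top _ _) fun _ ↦ measure_ne_top _ _).1
        (hμtail b hb)) (half_pos hε)] with x hx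
    calc (F ∗ₘ μ) (Ioi x)
        ≤ (1 + (ε / 2 : ℝ≥0)) * J.map (fun p ↦ p.1 * p.2) (Ioi x) +
            (ε / 2 : ℝ≥0) * J.map (fun p ↦ p.1 * p.2) (Ioi x) := hx
      _ = J.map (fun p ↦ p.1 * p.2) (Ioi x) +
            ((ε / 2 + ε / 2 : ℝ≥0) : ℝ≥0∞) * J.map (fun p ↦ p.1 * p.2) (Ioi x) := by
          push_cast
          ring
      _ ≤ J.map (fun p ↦ p.1 * p.2) (Ioi x) +
            ε * (J.map (fun p ↦ p.1 * p.2) (Ioi x) + (F ∗ₘ μ) (Ioi x)) := by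
          rw [add_halves]
          gcongr
          exact le_self_add

theorem MemLClass.map_mul {γ κ : ℝ} (hF : MemLClass F γ) (hγ : 0 ≤ γ)
    (hκ : IsRecipEndpoint μ κ) (hμ : ∀ᵐ v ∂μ, 0 ≤ v) (hJ : ∀ᵐ v ∂J.snd, 0 ≤ v)
    (hJμ : FstTailLE J (F.prod μ)) (hμJ : FstTailLE (F.prod μ) J)
    (htail : ∀ b > 0, (fun x ↦ J.snd.real (Ioi (b * x))) =o[atTop]
      fun x ↦ (J.map fun p ↦ p.1 * p.2).real (Ioi x)) :
    MemLClass (J.map fun p ↦ p.1 * p.2) (γ * κ) := by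
  obtain ⟨C, hC⟩ := hμJ.exists_le_smul_snd hF.tail_ne_zero
  have hμtail : ∀ b > 0, (fun x ↦ μ.real (Ioi (b * x))) =o[atTop]
      fun x ↦ (J.map fun p ↦ p.1 * p.2).real (Ioi x) := fun b hb ↦
    (isBigO_measureReal_of_le_smul hC _ _).trans_isLittleO (htail b hb)
  have hequiv := isEquivalent_map_mul_mconv hJμ hμJ hJ hμ htail hμtail
  exact (hF.mconv hγ hκ hμ fun b hb ↦ (hμtail b hb).trans_isBigO hequiv.isBigO).congr hequiv

lemma fstTailLE_withDensity_ofReal {ρ : Measure (ℝ × ℝ)} {f g : ℝ × ℝ → ℝ} {c : ℝ} (hc : 0 < c)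
    (hg : ∀ᶠ a in atTop, ∀ᵐ p ∂ρ, a < p.1 → c ≤ g p)
    (hfg : ∀ η > 0, ∀ᶠ a in atTop, ∀ᵐ p ∂ρ, a < p.1 → f p ≤ g p + η) :
    FstTailLE (ρ.withDensity fun p ↦ ENNReal.ofReal (f p))
      (ρ.withDensity fun p ↦ ENNReal.ofReal (g p)) := by
  intro ε hε
  filter_upwards [hg, hfg (ε * c) (mul_pos hε hc)] with a hga hfga
  have hmeas : MeasurableSet {p : ℝ × ℝ | a < p.1} := measurableSet_lt (by fun_prop) (by fun_prop)
  have hle : (fun p ↦ ENNReal.ofReal (f p)) ≤ᵐ[ρ.restrict {p | a < p.1}]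
      (↑(1 + ε) : ℝ≥0∞) • fun p ↦ ENNReal.ofReal (g p) := by
    filter_upwards [ae_restrict_mem hmeas, ae_restrict_of_ae hga, ae_restrict_of_ae hfga]
      with p hp hgp hfp
    rw [Pi.smul_apply, smul_eq_mul, ← ENNReal.ofReal_coe_nnreal,
      ← ENNReal.ofReal_mul (NNReal.coe_nonneg _)]
    refine ENNReal.ofReal_le_ofReal ?_
    calc f p ≤ g p + ε * c := hfp hp
      _ ≤ g p + ε * g p := by
          gcongr
          exact hgp hp
      _ = ↑(1 + ε) * g p := by
          push_cast
          ring
  calc (ρ.withDensity fun p ↦ ENNReal.ofReal (f p)).restrict {p | a < p.1}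
      = (ρ.restrict {p | a < p.1}).withDensity fun p ↦ ENNReal.ofReal (f p) :=
        restrict_withDensity hmeas _
    _ ≤ (ρ.restrict {p | a < p.1}).withDensity
          ((↑(1 + ε) : ℝ≥0∞) • fun p ↦ ENNReal.ofReal (g p)) := withDensity_mono hle
    _ ≤ ρ.withDensity ((↑(1 + ε) : ℝ≥0∞) • fun p ↦ ENNReal.ofReal (g p)) := by
        rw [← restrict_withDensity hmeas]
        exact Measure.restrict_le_self
    _ = (1 + ε) • ρ.withDensity fun p ↦ ENNReal.ofReal (g p) :=
        withDensity_smul' _ _ ENNReal.coe_ne_top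

end FstTailLE

section Sarmanov

lemma exists_neg_of_integral_eq_zero {α : Type*} [MeasurableSpace α] {μ : Measure α} {f : α → ℝ}
    (hf : Integrable f μ) (h : ∫ x, f x ∂μ = 0) (hne : ¬f =ᵐ[μ] 0) : ∃ x, f x < 0 := by
  by_contra! hnn
  exact hne ((integral_eq_zero_iff_of_nonneg hnn hf).1 h)

lemma exists_pos_of_integral_eq_zero {α : Type*} [MeasurableSpace α] {μ : Measure α} {f : α → ℝ}
    (hf : Integrable f μ) (h : ∫ x, f x ∂μ = 0) (hne : ¬f =ᵐ[μ] 0) : ∃ x, 0 < f x := by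
  have hne' : ¬(fun x ↦ -f x) =ᵐ[μ] 0 := fun h₀ ↦ hne (h₀.mono fun _ ↦ neg_eq_zero.1)
  simpa using exists_neg_of_integral_eq_zero hf.neg
    ((integral_neg' f).trans (by rw [h, neg_zero])) hne'

/-- The limit, as `x → ∞`, of the conditional law of `Y` given `X = x` when the density of
`(X, Y)` is `1 + θ φ₁(x) φ₂(y)`, `Y` has law `G` and `θ φ₁(x) → a`. -/
def sarmanovLimitLaw (G : Measure ℝ) (φ₂ : ℝ → ℝ) (a : ℝ) : Measure ℝ :=
  G.withDensity fun v ↦ ENNReal.ofReal (1 + a * φ₂ v)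

variable {F G : Measure ℝ} {φ₁ φ₂ : ℝ → ℝ} {θ a c d : ℝ}

lemma isFiniteMeasure_sarmanovLimitLaw [IsFiniteMeasure G] (hφ₂ : Integrable φ₂ G) (a : ℝ) :
    IsFiniteMeasure (sarmanovLimitLaw G φ₂ a) :=
  isFiniteMeasure_withDensity_ofReal ((integrable_const 1).add (hφ₂.const_mul a)).2

lemma sarmanovLimitLaw_absolutelyContinuous (G : Measure ℝ) (φ₂ : ℝ → ℝ) (a : ℝ) :
    sarmanovLimitLaw G φ₂ a ≪ G :=
  withDensity_absolutelyContinuous _ _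

lemma absolutelyContinuous_sarmanovLimitLaw (hφ₂ : Measurable φ₂) (hc : 0 < c)
    (h : ∀ᵐ v ∂G, c ≤ 1 + a * φ₂ v) : G ≪ sarmanovLimitLaw G φ₂ a := by
  refine withDensity_absolutelyContinuous' (by fun_prop) ?_
  filter_upwards [h] with v hv
  exact (ENNReal.ofReal_pos.2 (hc.trans_le hv)).ne'

lemma prod_sarmanovLimitLaw [SFinite G] (hφ₂ : Measurable φ₂) (a : ℝ) :
    F.prod (sarmanovLimitLaw G φ₂ a) =
      (F.prod G).withDensity fun p ↦ ENNReal.ofReal (1 + a * φ₂ p.2) :=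
  prod_withDensity_right (by fun_prop)

lemma exists_abs_mul_le_of_one_add_mul_nonneg {x₁ x₂ : ℝ} (h₁ : φ₁ x₁ < 0) (h₂ : 0 < φ₁ x₂)
    (hnn : ∀ x y, 0 ≤ y → 0 ≤ 1 + θ * φ₁ x * φ₂ y) : ∃ M, ∀ y, 0 ≤ y → |θ * φ₂ y| ≤ M := by
  refine ⟨max (φ₁ x₂)⁻¹ (-φ₁ x₁)⁻¹, fun y hy ↦ abs_le.2 ⟨?_, ?_⟩⟩
  · rw [neg_le]
    refine le_max_of_le_left ?_
    rw [← one_div, le_div_iff₀ h₂]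
    linarith [hnn x₂ y hy]
  · refine le_max_of_le_right ?_
    rw [← one_div, le_div_iff₀ (neg_pos.2 h₁)]
    linarith [hnn x₁ y hy]

lemma limit_eq_zero_of_ae_eq_zero (hF : ∀ x, F (Ioi x) ≠ 0) (hlim : Tendsto φ₁ atTop (𝓝 d))
    (h : φ₁ =ᵐ[F] 0) : d = 0 := by
  have hfreq : ∃ᶠ x in atTop, φ₁ x = 0 := by
    refine frequently_atTop.2 fun x ↦ ?_
    by_contra! hne
    exact hF x (measure_mono_null (fun u hu ↦ hne u (mem_Ioi.1 hu).le) h)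
  by_contra hd
  exact hfreq (hlim.eventually_ne hd)

/-- Either `φ₁` vanishes almost everywhere, or nonnegativity of the density at points where `φ₁`
takes either sign bounds `φ₂`. -/
lemma eventually_ae_abs_sarmanov_sub_le (hF : ∀ x, F (Ioi x) ≠ 0) (hφ₁ : Integrable φ₁ F)
    (hφ₁_zero : ∫ x, φ₁ x ∂F = 0) (hlim : Tendsto φ₁ atTop (𝓝 d))
    (hnn : ∀ x y, 0 ≤ y → 0 ≤ 1 + θ * φ₁ x * φ₂ y) {η : ℝ} (hη : 0 < η) :
    ∀ᶠ b in atTop, ∀ᵐ x ∂F, b < x →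
      ∀ y, 0 ≤ y → |θ * φ₁ x * φ₂ y - θ * d * φ₂ y| ≤ η := by
  by_cases hφ : φ₁ =ᵐ[F] 0
  · refine Eventually.of_forall fun b ↦ ?_
    filter_upwards [hφ] with x hx _ y _
    simpa [hx, limit_eq_zero_of_ae_eq_zero hF hlim hφ] using hη.le
  · obtain ⟨x₁, h₁⟩ := exists_neg_of_integral_eq_zero hφ₁ hφ₁_zero hφ
    obtain ⟨x₂, h₂⟩ := exists_pos_of_integral_eq_zero hφ₁ hφ₁_zero hφ
    obtain ⟨M, hM⟩ := exists_abs_mul_le_of_one_add_mul_nonneg h₁ h₂ hnn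
    have hdist : Tendsto (fun x ↦ |φ₁ x - d| * M) atTop (𝓝 0) := by
      simpa using (hlim.sub_const d).abs.mul_const M
    obtain ⟨b, hb⟩ := eventually_atTop.1 (hdist.eventually_le_const hη)
    filter_upwards [eventually_ge_atTop b] with b' hb'
    refine ae_of_all _ fun x hx y hy ↦ ?_
    calc |θ * φ₁ x * φ₂ y - θ * d * φ₂ y| = |φ₁ x - d| * |θ * φ₂ y| := by
          rw [← abs_mul]
          ring_nf
      _ ≤ |φ₁ x - d| * M := by
          gcongr
          exact hM y hy
      _ ≤ η := hb x (hb'.trans hx.le)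

lemma fstTailLE_sarmanov [SFinite G] (hφ₂m : Measurable φ₂)
    (hG : ∀ᵐ y ∂G, 0 ≤ y) (hF : ∀ x, F (Ioi x) ≠ 0) (hφ₁ : Integrable φ₁ F)
    (hφ₁_zero : ∫ x, φ₁ x ∂F = 0) (hlim : Tendsto φ₁ atTop (𝓝 d))
    (hnn : ∀ x y, 0 ≤ y → 0 ≤ 1 + θ * φ₁ x * φ₂ y) (hc : 0 < c)
    (hlb : ∀ᵐ y ∂G, c ≤ 1 + θ * d * φ₂ y) {J : Measure (ℝ × ℝ)}
    (hJ : J = (F.prod G).withDensity fun p ↦ ENNReal.ofReal (1 + θ * φ₁ p.1 * φ₂ p.2)) :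
    FstTailLE J (F.prod (sarmanovLimitLaw G φ₂ (θ * d))) ∧
      FstTailLE (F.prod (sarmanovLimitLaw G φ₂ (θ * d))) J := by
  have hclose : ∀ η > 0, ∀ᶠ b in atTop, ∀ᵐ p ∂F.prod G, b < p.1 →
      |θ * φ₁ p.1 * φ₂ p.2 - θ * d * φ₂ p.2| ≤ η := fun η hη ↦ by
    filter_upwards [eventually_ae_abs_sarmanov_sub_le hF hφ₁ hφ₁_zero hlim hnn hη] with b hb
    filter_upwards [Measure.quasiMeasurePreserving_fst.ae hb,
      Measure.quasiMeasurePreserving_snd.ae hG] with p hp hp₂ hbp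
    exact hp hbp p.2 hp₂
  have hlb' : ∀ᵐ p ∂F.prod G, c ≤ 1 + θ * d * φ₂ p.2 :=
    Measure.quasiMeasurePreserving_snd.ae hlb
  rw [hJ, prod_sarmanovLimitLaw hφ₂m]
  constructor
  · refine fstTailLE_withDensity_ofReal hc (Eventually.of_forall fun b ↦ ?_) fun η hη ↦ ?_
    · filter_upwards [hlb'] with p hp _ using hp
    · filter_upwards [hclose η hη] with b hb
      filter_upwards [hb] with p hp hbp
      linarith [(abs_le.1 (hp hbp)).2]
  · refine fstTailLE_withDensity_ofReal (half_pos hc) ?_ fun η hη ↦ ?_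
    · filter_upwards [hclose (c / 2) (half_pos hc)] with b hb
      filter_upwards [hb, hlb'] with p hp hp_lb hbp
      linarith [(abs_le.1 (hp hbp)).1]
    · filter_upwards [hclose η hη] with b hb
      filter_upwards [hb] with p hp hbp
      linarith [(abs_le.1 (hp hbp)).1]

theorem MemLClass.map_mul_of_sarmanov {γ κ : ℝ} {J : Measure (ℝ × ℝ)} [IsProbabilityMeasure F]
    [IsFiniteMeasure J] (hF : MemLClass F γ) (hγ : 0 ≤ γ) (hκ : IsRecipEndpoint J.snd κ)
    (hJ₀ : ∀ᵐ y ∂J.snd, 0 ≤ y) (hφ₁ : Integrable φ₁ F) (hφ₁_zero : ∫ x, φ₁ x ∂F = 0)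
    (hφ₂m : Measurable φ₂) (hφ₂ : Integrable φ₂ J.snd)
    (hnn : ∀ x y, 0 ≤ y → 0 ≤ 1 + θ * φ₁ x * φ₂ y)
    (hJ : J = (F.prod J.snd).withDensity fun p ↦ ENNReal.ofReal (1 + θ * φ₁ p.1 * φ₂ p.2))
    (hlim : Tendsto φ₁ atTop (𝓝 d)) (hc : 0 < c) (hlb : ∀ᵐ y ∂J.snd, c ≤ 1 + θ * d * φ₂ y)
    (htail : ∀ b > 0, (fun x ↦ J.snd.real (Ioi (b * x))) =o[atTop]
      fun x ↦ (J.map fun p ↦ p.1 * p.2).real (Ioi x)) :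
    MemLClass (J.map fun p ↦ p.1 * p.2) (γ * κ) := by
  have := isFiniteMeasure_sarmanovLimitLaw hφ₂ (θ * d)
  have hac := sarmanovLimitLaw_absolutelyContinuous J.snd φ₂ (θ * d)
  obtain ⟨hJμ, hμJ⟩ :=
    fstTailLE_sarmanov hφ₂m hJ₀ hF.tail_ne_zero hφ₁ hφ₁_zero hlim hnn hc hlb hJ
  exact hF.map_mul hγ (hκ.congr hac (absolutelyContinuous_sarmanovLimitLaw hφ₂m hc hlb))
    (hac.ae_le hJ₀) hJ₀ hJμ hμJ htail

end Sarmanov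

section Differentiation

lemma frequently_measure_singleton_sub_eq_zero (G : Measure ℝ) [SFinite G] (y : ℝ) :
    ∃ᶠ δ in 𝓝[>] 0, G {y - δ} = 0 := by
  have hcount : {t : ℝ | 0 < G {v | y - v = t}}.Countable :=
    Measure.countable_meas_level_set_pos (by fun_prop)
  have hclosure := (hcount.dense_compl ℝ).open_subset_closure_inter (isOpen_Ioi (a := (0 : ℝ)))
  have hzero : (0 : ℝ) ∈ closure (Ioi 0 ∩ {t : ℝ | 0 < G {v | y - v = t}}ᶜ) :=
    closure_minimal hclosure isClosed_closure (by simp)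
  refine frequently_nhdsWithin_iff.2 ((mem_closure_iff_frequently.1 hzero).mono fun δ hδ ↦ ?_)
  have hset : {v | y - v = δ} = {y - δ} := by
    ext v
    simp only [mem_ofPred_eq, mem_singleton_iff]
    constructor <;> intro h <;> linarith
  exact ⟨by simpa [hset] using hδ.2, hδ.1⟩

/-- Lebesgue's differentiation theorem concerns closed balls; half-open intervals agree with them
up to a null set for all but countably many radii. -/
lemma ae_eq_of_tendsto_average_Ioc {G : Measure ℝ} [IsLocallyFiniteMeasure G] {φ ψ : ℝ → ℝ}
    (hφ : LocallyIntegrable φ G)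
    (hψ : ∀ y ∈ G.support, Tendsto (fun δ ↦ ⨍ v in Ioc (y - δ) (y + δ), φ v ∂G) (𝓝[>] 0)
      (𝓝 (ψ y))) : ψ =ᵐ[G] φ := by
  filter_upwards [Measure.support_mem_ae, (Besicovitch.vitaliFamily G).ae_tendsto_average hφ]
    with y hy hball
  have hball' := hball.comp (Besicovitch.tendsto_filterAt G y)
  have hfreq := frequently_measure_singleton_sub_eq_zero G y
  have : (𝓝[>] (0 : ℝ) ⊓ 𝓟 {δ | G {y - δ} = 0}).NeBot := frequently_iff_neBot.1 hfreq
  refine tendsto_nhds_unique (l := 𝓝[>] (0 : ℝ) ⊓ 𝓟 {δ | G {y - δ} = 0})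
    ((hψ y hy).mono_left inf_le_left)
    ((hball'.mono_left inf_le_left).congr' ?_)
  filter_upwards [inf_le_right (a := 𝓝[>] (0 : ℝ)) (mem_principal_self _)] with δ hδ
  have hae : Ioc (y - δ) (y + δ) =ᵐ[G] Icc (y - δ) (y + δ) := Ioc_ae_eq_Icc' hδ
  rw [Function.comp_apply, Real.closedBall_eq_Icc, setAverage_congr hae]

end Differentiation

section RandomVariables

lemma measure_Ioi_eq_zero_of_isLUB {G : Measure ℝ} {β : ℝ}
    (hβ : IsLUB {y | G (Ioi y) ≠ 0} β) : G (Ioi β) = 0 := by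
  obtain ⟨u, -, hu, hlim⟩ := exists_seq_strictAnti_tendsto β
  refine measure_mono_null (t := ⋃ n, Ioi (u n)) (fun v hv ↦ ?_) (measure_iUnion_null fun n ↦ ?_)
  · exact mem_iUnion.2 (hlim.eventually_lt_const (mem_Ioi.1 hv)).exists
  · by_contra hn
    exact (hβ.1 hn).not_gt (hu n)

lemma isRecipEndpoint_inv_of_isLUB {G : Measure ℝ} {β : ℝ} (hG : G (Ioi 0) ≠ 0)
    (hβ : IsLUB {y | G (Ioi y) ≠ 0} β) : IsRecipEndpoint G β⁻¹ := by
  have hβ_null := measure_Ioi_eq_zero_of_isLUB hβ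
  have hβ_pos : 0 < β := (hβ.1 hG).lt_of_ne (by rintro rfl; exact hG hβ_null)
  refine ⟨by positivity, ?_, fun r hr ↦ ?_⟩
  · have hle : ∀ᵐ v ∂G, v ≤ β := by simpa [ae_iff, Ioi] using hβ_null
    filter_upwards [hle] with v hv
    rwa [inv_mul_le_one₀ hβ_pos]
  · obtain ⟨y, hy, hry, -⟩ := hβ.exists_between (inv_lt_of_inv_lt₀ hβ_pos hr)
    exact fun h₀ ↦ hy (measure_mono_null (Ioi_subset_Ioi hry.le) h₀)

lemma isRecipEndpoint_zero_of_not_bddAbove {G : Measure ℝ}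
    (h : ¬BddAbove {y | G (Ioi y) ≠ 0}) : IsRecipEndpoint G 0 := by
  refine ⟨le_rfl, by simp, fun r _ h₀ ↦ ?_⟩
  obtain ⟨y, hy, hry⟩ := not_bddAbove_iff.1 h r⁻¹
  exact hy (measure_mono_null (Ioi_subset_Ioi hry.le) h₀)

variable {Ω : Type*} [MeasureSpace Ω] {X Y : Ω → ℝ}

lemma exists_isRecipEndpoint_map [IsFiniteMeasure (ℙ : Measure Ω)] (hY : Measurable Y)
    (h : Measure.map Y ℙ (Ioi 0) ≠ 0) (γ : ℝ) :
    ∃ κ, gammaOverBeta Y γ = γ * κ ∧ IsRecipEndpoint (Measure.map Y ℙ) κ := by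
  have hset : {y | 0 < rvTail Y y} = {y | Measure.map Y ℙ (Ioi y) ≠ 0} := by
    ext y
    simp [rvTail_eq_measureReal_map hY, measureReal_nonneg.lt_iff_ne', measureReal_eq_zero_iff]
  rw [gammaOverBeta, hset]
  split_ifs with hbdd
  · exact ⟨_, div_eq_mul_inv _ _, isRecipEndpoint_inv_of_isLUB h (isLUB_csSup ⟨0, h⟩ hbdd)⟩
  · exact ⟨0, (mul_zero γ).symm, isRecipEndpoint_zero_of_not_bddAbove hbdd⟩

lemma map_Ioi_zero_ne_zero [IsProbabilityMeasure (ℙ : Measure Ω)] (hY : Measurable Y)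
    (hY₀ : ∀ ω, 0 ≤ Y ω) (hne : ℙ {ω | Y ω = 0} ≠ 1) : Measure.map Y ℙ (Ioi 0) ≠ 0 := by
  rw [Measure.map_apply hY measurableSet_Ioi]
  contrapose! hne
  refine (mem_ae_iff_prob_eq_one (hY (measurableSet_singleton 0))).1 ?_
  filter_upwards [measure_eq_zero_iff_ae_notMem.1 hne] with ω hω
  exact (not_lt.1 hω).antisymm (hY₀ ω)

lemma SarmanovPsi.ae_eq [IsFiniteMeasure (ℙ : Measure Ω)] {φ₂ ψ : ℝ → ℝ} (hY : Measurable Y)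
    (hφ₂ : Integrable φ₂ (Measure.map Y ℙ)) (hψ : SarmanovPsi Y φ₂ ψ) :
    ψ =ᵐ[Measure.map Y ℙ] φ₂ := by
  refine ae_eq_of_tendsto_average_Ioc hφ₂.locallyIntegrable fun y hy ↦ ?_
  have hsupp : y ∈ distSupport Y := fun δ hδ ↦ by
    have hpos := (Measure.mem_support_iff_forall y).1 hy _
      (Ioo_mem_nhds (sub_lt_self y hδ) (lt_add_of_pos_right y hδ))
    rwa [Measure.map_apply hY measurableSet_Ioo] at hpos
  have hcdf : ∀ b, rvCdf Y b = (Measure.map Y ℙ).real (Iic b) := fun b ↦ by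
    rw [map_measureReal_apply hY measurableSet_Iic]
    rfl
  refine (hψ y hsupp).congr' ?_
  filter_upwards [self_mem_nhdsWithin] with δ hδ
  have hle : y - δ ≤ y + δ := by linarith [mem_Ioi.1 hδ]
  have hIoc : Iic (y + δ) \ Iic (y - δ) = Ioc (y - δ) (y + δ) := by
    rw [sdiff_eq, compl_Iic, inter_comm, Ioi_inter_Iic]
  rw [hcdf, hcdf, ← measureReal_sdiff (Iic_subset_Iic.2 hle) measurableSet_Iic, hIoc,
    setAverage_eq, smul_eq_mul, div_eq_inv_mul]

lemma assumption2_iff_isLittleO_map (hX : Measurable X) (hY : Measurable Y) :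
    Assumption2 X Y ↔ ∀ b > 0,
      (fun x ↦ (Measure.map (fun ω ↦ (X ω, Y ω)) ℙ).snd.real (Ioi (b * x))) =o[atTop]
        fun x ↦ ((Measure.map (fun ω ↦ (X ω, Y ω)) ℙ).map fun p ↦ p.1 * p.2).real (Ioi x) := by
  have hXY : Measurable fun ω ↦ X ω * Y ω := hX.mul hY
  rw [Measure.snd_map_prodMk hX, Measure.map_map (by fun_prop) (by fun_prop)]
  simp only [Assumption2, rvTail_eq_measureReal_map hY, rvTail_eq_measureReal_map hXY]
  rfl

lemma SarmanovPsi.ae_le_one_add_mul [IsProbabilityMeasure (ℙ : Measure Ω)] {φ₂ ψ : ℝ → ℝ} {a c : ℝ}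
    (hY : Measurable Y) (hφ₂m : Measurable φ₂) (hφ₂ : Integrable φ₂ (Measure.map Y ℙ))
    (hψ : SarmanovPsi Y φ₂ ψ) (h : ℙ {ω | c ≤ 1 + a * ψ (Y ω)} = 1) :
    ∀ᵐ y ∂Measure.map Y ℙ, c ≤ 1 + a * φ₂ y := by
  have hset : MeasurableSet {y | c ≤ 1 + a * φ₂ y} :=
    measurableSet_le (by fun_prop) (by fun_prop)
  have hφψ : {ω | c ≤ 1 + a * φ₂ (Y ω)} =ᵐ[ℙ] {ω | c ≤ 1 + a * ψ (Y ω)} := by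
    filter_upwards [ae_of_ae_map hY.aemeasurable (hψ.ae_eq hY hφ₂)] with ω hω
    exact congrArg (fun z ↦ c ≤ 1 + a * z) hω.symm
  refine (ae_map_iff hY.aemeasurable hset).2 ((mem_ae_iff_prob_eq_one (hY hset)).2 ?_)
  exact (measure_congr hφψ).trans h

end RandomVariables

theorem product_memL_of_sarmanov_general {Ω : Type*} [MeasureSpace Ω]
    [IsProbabilityMeasure (ℙ : Measure Ω)] (X Y : Ω → ℝ) (hXm : Measurable X)
    (hYm : Measurable Y) (hYnonneg : ∀ ω, 0 ≤ Y ω) (hYnd : ℙ {ω | Y ω = 0} ≠ 1)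
    (φ₁ φ₂ ψ : ℝ → ℝ) (θ c d₁ : ℝ) (hSar : Sarmanov X Y φ₁ φ₂ θ) (hc : 0 < c)
    (hψ : SarmanovPsi Y φ₂ ψ) (hφ₁ : Tendsto φ₁ atTop (𝓝 d₁))
    (has : ℙ {ω | c ≤ 1 + θ * d₁ * ψ (Y ω)} = 1) (hA2 : Assumption2 X Y)
    (γ : ℝ) (hγ : 0 ≤ γ) (hFL : MemLGamma X γ) :
    MemLGamma (fun ω ↦ X ω * Y ω) (gammaOverBeta Y γ) := by
  obtain ⟨hφ₁m, hφ₂m, hφ₁i, hφ₂i, hφ₁_zero, -, hnn, hlaw⟩ := hSar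
  have := Measure.isProbabilityMeasure_map (μ := (ℙ : Measure Ω)) hXm.aemeasurable
  have hsnd : (Measure.map (fun ω ↦ (X ω, Y ω)) ℙ).snd = Measure.map Y ℙ :=
    Measure.snd_map_prodMk hXm
  have hφ₁X : Integrable φ₁ (Measure.map X ℙ) :=
    (integrable_map_measure hφ₁m.aestronglyMeasurable hXm.aemeasurable).2 hφ₁i
  have hφ₁X_zero : ∫ x, φ₁ x ∂Measure.map X ℙ = 0 :=
    (integral_map hXm.aemeasurable hφ₁m.aestronglyMeasurable).trans hφ₁_zero
  have hφ₂Y : Integrable φ₂ (Measure.map Y ℙ) :=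
    (integrable_map_measure hφ₂m.aestronglyMeasurable hYm.aemeasurable).2 hφ₂i
  have hY₀ : ∀ᵐ y ∂Measure.map Y ℙ, 0 ≤ y :=
    (ae_map_iff hYm.aemeasurable measurableSet_Ici).2 (ae_of_all _ hYnonneg)
  obtain ⟨κ, hκ_eq, hκ⟩ :=
    exists_isRecipEndpoint_map hYm (map_Ioi_zero_ne_zero hYm hYnonneg hYnd) γ
  have hprod := ((memLGamma_iff_memLClass_map hXm).1 hFL).map_mul_of_sarmanov hγ
    (hsnd ▸ hκ) (hsnd ▸ hY₀) hφ₁X hφ₁X_zero hφ₂m (hsnd ▸ hφ₂Y) hnn (hsnd.symm ▸ hlaw) hφ₁ hc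
    (hsnd ▸ hψ.ae_le_one_add_mul hYm hφ₂m hφ₂Y has) ((assumption2_iff_isLittleO_map hXm hYm).1 hA2)
  rw [Measure.map_map (by fun_prop) (by fun_prop)] at hprod
  rw [hκ_eq]
  exact (memLGamma_iff_memLClass_map (hXm.mul hYm)).2 hprod

theorem product_memL_of_sarmanov {Ω : Type*} [MeasureSpace Ω] [IsProbabilityMeasure (ℙ : Measure Ω)]
    (X Y : Ω → ℝ) (hXm : Measurable X) (hYm : Measurable Y)
    (hYnonneg : ∀ ω, 0 ≤ Y ω)
    (hFunb : UnboundedDist X)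
    (hXnd : ℙ {ω | X ω = 0} ≠ 1) (hYnd : ℙ {ω | Y ω = 0} ≠ 1)
    (φ₁ φ₂ ψ : ℝ → ℝ) (θ c d₁ : ℝ)
    (hSar : Sarmanov X Y φ₁ φ₂ θ)
    (hc : 0 < c) (hd₁ : 0 < d₁) (hψm : Measurable ψ)
    (hψ : SarmanovPsi Y φ₂ ψ)
    (hφ₁ : Filter.Tendsto φ₁ atTop (nhds d₁))
    (has : ℙ {ω | c ≤ 1 + θ * d₁ * ψ (Y ω)} = 1)
    (hA2 : Assumption2 X Y)
    (γ : ℝ) (hγ : 0 ≤ γ) (hFL : MemLGamma X γ) :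
    MemLGamma (fun ω => X ω * Y ω) (gammaOverBeta Y γ) :=
  product_memL_of_sarmanov_general X Y hXm hYm hYnonneg hYnd φ₁ φ₂ ψ θ c d₁ hSar hc hψ hφ₁ has hA2
    γ hγ hFL
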